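/- arXiv:2209.07994 — 5 statements merged into one kernel-verified Lean document; each statement's English description precedes it below -/
import Mathlib

section
/- For every capacitated energy market with finite sets of sellers and consumers, seller capacities d, consumer demands b, and complete strict preferences, there exists a feasible allocation that is stable, i.e., no seller–consumer pair blocks it. (Existence form of the paper's Proposition 2: the EM algorithm's output is a feasible and stable energy matching.) -/
/-!
The proof is a lattice fixed-point argument. If an agent with quota `q` is offered up to `X i` blocks
by each partner `i`, it fills its quota greedily from the best partner downwards and rejects the
rest, `rejected r q X`. The rejected amounts are monotone in the offers (`rejected_mono`).

Let `M s c = d s + b c + 1`, a bound on trade that no feasible allocation can reach. Look for `X`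
(the blocks available to sellers) and `Y` (the blocks available to consumers) with
`Y = M - (rejections of X by the sellers)` and `X = M - (rejections of Y by the consumers)`.
Substituting one equation into the other makes `X` a fixed point of a monotone map bounded by `M`,
and such a fixed point exists (`exists_fixed_of_mono`). The amounts accepted by the two sides then
agree, both being `X + Y - M`; this is the allocation. It is feasible because greedy choices respect
quotas. An agent that rejects something from a partner is full and takes nothing from worse partners
(`rejected_pos`), so a blocking pair `(s, c)` would have no rejection on either side; then
`X s c = Y s c = M s c`, and `M s c > d s` blocks would be traded, contradicting feasibility.
-/

/-!
Capacitated (many-to-many) energy market: finite sets of sellers `S` and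
consumers `C`, capacities `d : S → ℕ`, demands `b : C → ℕ`, and complete
strict preferences given as strict total orders `prefS s` and `prefC c`.
An allocation `A : S → C → ℕ` gives the number of energy blocks each seller
supplies to each consumer.
-/

/-- `A` is a feasible allocation: each seller supplies at most its capacity
and each consumer receives at most its demand. -/
def FeasibleAlloc {S C : Type*} [Fintype S] [Fintype C]
    (d : S → ℕ) (b : C → ℕ) (A : S → C → ℕ) : Prop :=
  (∀ s : S, ∑ c : C, A s c ≤ d s) ∧ (∀ c : C, ∑ s : S, A s c ≤ b c)

/-- The pair `(s, c)` blocks the allocation `A`: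
(i) `s` has spare capacity, or supplies some consumer `c'` it likes less
than `c`; and (ii) `c` has unmet demand, or is supplied by some seller `s'`
it likes less than `s`. -/
def AllocBlockingPair {S C : Type*} [Fintype S] [Fintype C]
    (prefS : S → C → C → Prop) (prefC : C → S → S → Prop)
    (d : S → ℕ) (b : C → ℕ) (A : S → C → ℕ) (s : S) (c : C) : Prop :=
  ((∑ c' : C, A s c' < d s) ∨ ∃ c' : C, 0 < A s c' ∧ prefS s c c') ∧
  ((∑ s' : S, A s' c < b c) ∨ ∃ s' : S, 0 < A s' c ∧ prefC c s s')

/-- `A` is a stable allocation: no seller–consumer pair blocks it. -/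
def StableAlloc {S C : Type*} [Fintype S] [Fintype C]
    (prefS : S → C → C → Prop) (prefC : C → S → S → Prop)
    (d : S → ℕ) (b : C → ℕ) (A : S → C → ℕ) : Prop :=
  ∀ (s : S) (c : C), ¬ AllocBlockingPair prefS prefC d b A s c

open Classical in
/-- The amount of the offer `X i` that an agent with quota `q` turns down when it accepts blocks
greedily in the order `r` (`r j i` means that `j` is preferred to `i`): partner `i` can fill only
what the full offers of the better partners leave of the quota. Truncated subtraction is intended in
both places. The accepted amount is `X i - rejected r q X i`. -/
noncomputable def rejected {ι : Type*} [Fintype ι] (r : ι → ι → Prop) (q : ℕ) (X : ι → ℕ) (i : ι) :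
    ℕ :=
  X i - (q - ∑ j, if r j i then X j else 0)

lemma rejected_le {ι : Type*} [Fintype ι] (r : ι → ι → Prop) (q : ℕ) (X : ι → ℕ) (i : ι) :
    rejected r q X i ≤ X i :=
  Nat.sub_le _ _

lemma rejected_mono {ι : Type*} [Fintype ι] (r : ι → ι → Prop) (q : ℕ) {X X' : ι → ℕ}
    (h : ∀ i, X i ≤ X' i) (i : ι) : rejected r q X i ≤ rejected r q X' i := by
  classical
  unfold rejected
  have hs : (∑ j, if r j i then X j else 0) ≤ ∑ j, if r j i then X' j else 0 := by
    refine Finset.sum_le_sum fun j _ => ?_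
    split_ifs
    · exact h j
    · exact le_rfl
  have := h i
  omega

/-- Greedy choice from the partners in `t` accepts `min q (total offer)` blocks in total, by
induction on `t`, adding the least preferred partner last. -/
lemma sum_greedy {ι : Type*} [LinearOrder ι] (q : ℕ) (X : ι → ℕ) (t : Finset ι) :
    ∑ i ∈ t, min (X i) (q - ∑ j ∈ t, if j < i then X j else 0) = min q (∑ i ∈ t, X i) := by
  induction t using Finset.induction_on_max with
  | empty => simp
  | insert a t ha ih =>
    have hat : a ∉ t := fun h => lt_irrefl _ (ha a h)
    rw [Finset.sum_insert hat, Finset.sum_insert hat, Finset.sum_insert hat]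
    have h1 : (∑ j ∈ t, if j < a then X j else 0) = ∑ j ∈ t, X j :=
      Finset.sum_congr rfl fun j hj => if_pos (ha j hj)
    have h2 : ∑ i ∈ t, min (X i) (q - ∑ j ∈ insert a t, if j < i then X j else 0)
        = ∑ i ∈ t, min (X i) (q - ∑ j ∈ t, if j < i then X j else 0) := by
      refine Finset.sum_congr rfl fun i hi => ?_
      rw [Finset.sum_insert hat, if_neg (ha i hi).not_gt, zero_add]
    rw [h1, h2, ih, if_neg (lt_irrefl a)]
    omega

lemma sum_accepted {ι : Type*} [Fintype ι] (r : ι → ι → Prop) (hr : IsStrictTotalOrder ι r)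
    (q : ℕ) (X : ι → ℕ) : ∑ i, (X i - rejected r q X i) = min q (∑ i, X i) := by
  classical
  let _ : LinearOrder ι := linearOrderOfSTO r
  rw [← sum_greedy q X Finset.univ]
  refine Finset.sum_congr rfl fun i _ => ?_
  have h : (∑ j, if r j i then X j else 0) = ∑ j, if j < i then X j else 0 :=
    Finset.sum_congr rfl fun j _ => if_congr Iff.rfl rfl rfl
  unfold rejected
  rw [← h]
  convert (show X i - (X i - (q - ∑ j, if r j i then X j else 0)) =
    min (X i) (q - ∑ j, if r j i then X j else 0) by omega)

/-- An agent that rejects part of an offer is full and accepts nothing from worse partners. -/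
lemma rejected_pos {ι : Type*} [Fintype ι] (r : ι → ι → Prop) (hr : IsStrictTotalOrder ι r)
    (q : ℕ) (X : ι → ℕ) (i : ι) (h : 0 < rejected r q X i) :
    ∑ j, (X j - rejected r q X j) = q ∧ ∀ k, r i k → X k - rejected r q X k = 0 := by
  classical
  have key : ∀ f : ι → Prop, f i → (∀ j, r j i → f j) →
      q ≤ ∑ j, if f j then X j else 0 := by
    intro f hi hf
    have h1 : (∑ j, ((if r j i then X j else 0) + if j = i then X j else 0))
        ≤ ∑ j, if f j then X j else 0 := by
      refine Finset.sum_le_sum fun j _ => ?_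
      by_cases hji : j = i
      · subst hji
        simp [hi, hr.irrefl]
      · by_cases hj : r j i
        · simp [hj, hji, hf j hj]
        · simp [hj, hji]
    rw [Finset.sum_add_distrib, Finset.sum_ite_eq' Finset.univ i X,
      if_pos (Finset.mem_univ i)] at h1
    unfold rejected at h
    omega
  constructor
  · rw [sum_accepted r hr]
    have := key (fun _ => True) trivial fun _ _ => trivial
    simp only [if_true] at this
    omega
  · intro k hk
    have := key (fun j => r j k) hk fun j hj => hr.trans _ _ _ hj hk
    unfold rejected
    omega

/-- A monotone self-map with a point `M` satisfying `F M ≤ M` has a fixed point when the order is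
well-founded: take a minimal `X` with `F X ≤ X`. -/
lemma exists_fixed_of_mono {α : Type*} [PartialOrder α] [WellFoundedLT α] (F : α → α)
    (hF : Monotone F) (M : α) (hM : F M ≤ M) : ∃ X, F X = X := by
  obtain ⟨X, hX, hmin⟩ := WellFounded.has_min (wellFounded_lt (α := α)) {X | F X ≤ X} ⟨M, hM⟩
  refine ⟨X, ?_⟩
  by_contra hne
  exact hmin (F X) (hF hX) (lt_of_le_of_ne hX hne)

/-- **Existence form of Proposition 2.** Every capacitated energy market with
finite sets of sellers and consumers, capacities `d`, demands `b`, and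
complete strict preferences admits a feasible and stable allocation. -/
theorem exists_feasible_stable_alloc
    {S C : Type*} [Fintype S] [Fintype C]
    (d : S → ℕ) (b : C → ℕ)
    (prefS : S → C → C → Prop) (prefC : C → S → S → Prop)
    (hS : ∀ s : S, IsStrictTotalOrder C (prefS s))
    (hC : ∀ c : C, IsStrictTotalOrder S (prefC c)) :
    ∃ A : S → C → ℕ, FeasibleAlloc d b A ∧ StableAlloc prefS prefC d b A := by
  let M : S → C → ℕ := fun s c => d s + b c + 1
  let G : (S → C → ℕ) → S → C → ℕ := fun X s c => M s c - rejected (prefS s) (d s) (X s) c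
  let H : (S → C → ℕ) → S → C → ℕ :=
    fun Y s c => M s c - rejected (prefC c) (b c) (fun s' => Y s' c) s
  have hmono : Monotone fun X => H (G X) := by
    intro X X' hXX' s c
    refine Nat.sub_le_sub_left (rejected_mono _ _ (fun s' => ?_) s) _
    exact Nat.sub_le_sub_left (rejected_mono _ _ (fun c' => hXX' s' c') c) _
  obtain ⟨X, hX⟩ := exists_fixed_of_mono _ hmono M fun s c => Nat.sub_le _ _
  obtain ⟨Y, hY⟩ : ∃ Y, Y = G X := ⟨_, rfl⟩
  have hXe : ∀ s c, X s c = M s c - rejected (prefC c) (b c) (fun s' => Y s' c) s := by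
    intro s c
    rw [hY]
    exact (congrFun (congrFun hX s) c).symm
  have hYe : ∀ s c, Y s c = M s c - rejected (prefS s) (d s) (X s) c := by
    intro s c
    rw [hY]
  have hRS : ∀ s c, rejected (prefS s) (d s) (X s) c ≤ X s c := fun s c => rejected_le _ _ _ _
  have hRC : ∀ s c, rejected (prefC c) (b c) (fun s' => Y s' c) s ≤ Y s c :=
    fun s c => rejected_le _ _ (fun s' => Y s' c) _
  -- The sellers' accepted amounts coincide with the consumers' accepted amounts.
  have hA : ∀ s c, X s c - rejected (prefS s) (d s) (X s) c =
      Y s c - rejected (prefC c) (b c) (fun s' => Y s' c) s := by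
    intro s c
    have := hXe s c
    have := hYe s c
    have := hRS s c
    have := hRC s c
    omega
  have hfS : ∀ s, ∑ c, (X s c - rejected (prefS s) (d s) (X s) c) ≤ d s := fun s =>
    (sum_accepted _ (hS s) _ _).trans_le (min_le_left _ _)
  refine ⟨fun s c => X s c - rejected (prefS s) (d s) (X s) c, ⟨hfS, fun c => ?_⟩, ?_⟩
  · simp only [hA]
    exact (sum_accepted _ (hC c) _ fun s' => Y s' c).trans_le (min_le_left _ _)
  · rintro s c ⟨h1, h2⟩
    have hs : rejected (prefS s) (d s) (X s) c = 0 := by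
      by_contra hne
      obtain ⟨hfull, hworse⟩ := rejected_pos _ (hS s) _ _ _ (Nat.pos_of_ne_zero hne)
      rcases h1 with h1 | ⟨c', hpos, hc'⟩
      · exact h1.ne hfull
      · exact hpos.ne' (hworse c' hc')
    have hc : rejected (prefC c) (b c) (fun s' => Y s' c) s = 0 := by
      by_contra hne
      obtain ⟨hfull, hworse⟩ := rejected_pos _ (hC c) _ _ _ (Nat.pos_of_ne_zero hne)
      simp only [hA] at h2
      rcases h2 with h2 | ⟨s', hpos, hs'⟩
      · exact h2.ne hfull
      · exact hpos.ne' (hworse s' hs')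
    have hle := Finset.single_le_sum
      (f := fun c => X s c - rejected (prefS s) (d s) (X s) c)
      (fun _ _ => Nat.zero_le _) (Finset.mem_univ c)
    have hXM : X s c = d s + b c + 1 := by rw [hXe, hc]; rfl
    have := hfS s
    simp only [hs, hXM] at hle
    omega
end

section
/- In a capacitated energy market with complete strict preferences, every stable feasible allocation A allocates exactly min(∑_{s ∈ S} d s, ∑_{c ∈ C} b c) blocks in total, i.e., ∑_{s,c} A s c = min of the total supply and the total demand. -/
/-- **Total volume of a stable allocation.** In a capacitated energy market
with complete strict preferences, every stable feasible allocation allocates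
exactly `min (total supply) (total demand)` blocks in total. -/
theorem stable_alloc_total_eq_min
    {S C : Type*} [Fintype S] [Fintype C]
    (d : S → ℕ) (b : C → ℕ)
    (prefS : S → C → C → Prop) (prefC : C → S → S → Prop)
    (hS : ∀ s : S, IsStrictTotalOrder C (prefS s))
    (hC : ∀ c : C, IsStrictTotalOrder S (prefC c))
    (A : S → C → ℕ) (hfeas : FeasibleAlloc d b A)
    (hstab : StableAlloc prefS prefC d b A) :
    ∑ s : S, ∑ c : C, A s c = min (∑ s : S, d s) (∑ c : C, b c) := by
  obtain ⟨hd, hb⟩ := hfeas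
  have hle_d : ∑ s, ∑ c, A s c ≤ ∑ s, d s := Finset.sum_le_sum fun s _ => hd s
  have hle_b : ∑ s, ∑ c, A s c ≤ ∑ c, b c := by
    rw [Finset.sum_comm]
    exact Finset.sum_le_sum fun c _ => hb c
  by_cases hsat : ∀ s, ∑ c, A s c = d s
  · have htot : ∑ s, ∑ c, A s c = ∑ s, d s := Finset.sum_congr rfl fun s _ => hsat s
    omega
  · push Not at hsat
    obtain ⟨s, hs⟩ := hsat
    -- A consumer with unmet demand would block together with the unsaturated seller `s`.
    have hmet : ∀ c, ∑ s', A s' c = b c := fun c =>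
      (hb c).eq_of_not_lt fun hc => hstab s c ⟨Or.inl ((hd s).lt_of_ne hs), Or.inl hc⟩
    have htot : ∑ s, ∑ c, A s c = ∑ c, b c := by
      rw [Finset.sum_comm]
      exact Finset.sum_congr rfl fun c _ => hmet c
    omega
end

section
/- Virtual-agent reduction (aggregation direction): if μ is a stable one-to-one matching between the virtual sellers V_S and the virtual consumers V_C of a capacitated energy market (with the inherited block-level preferences), then the aggregated allocation A defined by A s c = the number of pairs ((s,k),(c,i)) ∈ μ is a feasible and stable allocation of the capacitated market. -/
/-!
Feasibility: each matched pair uses up one copy of its seller and one copy of its consumer, so the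
row and column sums of the aggregation count used copies (`sum_aggregate_seller`,
`sum_aggregate_consumer`), of which there are at most `d s` and `b c` (`card_copies_le`).

Stability: suppose `(s, c)` blocks the aggregation. If `s` has spare capacity, then some copy of `s`
is unmatched; if `s` trades with a worse consumer `c'`, then some copy of `s` is matched to a copy
of `c'`. So some copy `v` of `s` has no match or a match at a consumer strictly worse than `c`, and
likewise some copy `w` of `c` (`exists_willing_seller`, `exists_willing_consumer`). By
irreflexivity `v` and `w` are not matched to each other, hence `(v, w)` blocks `μ`. The
comparison is always between distinct original agents, so the tie-breaking by copy index plays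
no role.
-/

/-!
Virtual-agent reduction for a capacitated energy market.  The virtual sellers
are pairs `(s, k)` with `1 ≤ k ≤ d s` (one per available block) and the
virtual consumers are pairs `(c, i)` with `1 ≤ i ≤ b c` (one per demanded
block), with the inherited block-level preferences.
-/

/-- `μ` is a one-to-one matching: every left agent and every right agent
appears in at most one pair of `μ`. -/
def IsOneToOneMatching {A B : Type*} [DecidableEq A] [DecidableEq B]
    (μ : Finset (A × B)) : Prop :=
  (∀ a : A, (μ.filter fun p => p.1 = a).card ≤ 1) ∧
  (∀ b : B, (μ.filter fun p => p.2 = b).card ≤ 1)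

/-- `(a, b) ∉ μ` is a blocking pair for `μ`: `b` is unmatched or prefers `a`
to its match, and `a` is unmatched or prefers `b` to its match. -/
def IsBlockingPair {A B : Type*}
    (prefA : A → B → B → Prop) (prefB : B → A → A → Prop)
    (μ : Finset (A × B)) (a : A) (b : B) : Prop :=
  (a, b) ∉ μ ∧
  (∀ a' : A, (a', b) ∈ μ → prefB b a a') ∧
  (∀ b' : B, (a, b') ∈ μ → prefA a b b')

/-- `μ` is a stable one-to-one matching: a matching with no blocking pair. -/
def IsStableMatching {A B : Type*} [DecidableEq A] [DecidableEq B]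
    (prefA : A → B → B → Prop) (prefB : B → A → A → Prop)
    (μ : Finset (A × B)) : Prop :=
  IsOneToOneMatching μ ∧ ∀ (a : A) (b : B), ¬ IsBlockingPair prefA prefB μ a b

/-- The virtual sellers: one copy `(s, k)`, `1 ≤ k ≤ d s`, per block
available with seller `s`. -/
abbrev VSel {S : Type*} (d : S → ℕ) : Type _ :=
  {p : S × ℕ // 1 ≤ p.2 ∧ p.2 ≤ d p.1}

/-- The virtual consumers: one copy `(c, i)`, `1 ≤ i ≤ b c`, per block
demanded by consumer `c`. -/
abbrev VCon {C : Type*} (b : C → ℕ) : Type _ :=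
  {q : C × ℕ // 1 ≤ q.2 ∧ q.2 ≤ b q.1}

/-- Inherited preference of a virtual seller `(s, k)`: it prefers `(c, i)` to
`(c', i')` iff `c >ₛ c'`, or `c = c'` and `i < i'`. -/
def vPrefS {S C : Type*} (prefS : S → C → C → Prop) (d : S → ℕ) (b : C → ℕ) :
    VSel d → VCon b → VCon b → Prop :=
  fun vs q q' => prefS vs.1.1 q.1.1 q'.1.1 ∨ (q.1.1 = q'.1.1 ∧ q.1.2 < q'.1.2)

/-- Inherited preference of a virtual consumer `(c, i)`: it prefers `(s, k)`
to `(s', k')` iff `s >_c s'`, or `s = s'` and `k < k'`. -/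
def vPrefC {S C : Type*} (prefC : C → S → S → Prop) (d : S → ℕ) (b : C → ℕ) :
    VCon b → VSel d → VSel d → Prop :=
  fun vc p p' => prefC vc.1.1 p.1.1 p'.1.1 ∨ (p.1.1 = p'.1.1 ∧ p.1.2 < p'.1.2)

/-- The aggregation of a virtual matching `μ`: `aggregate μ s c` is the number
of pairs `((s, k), (c, i)) ∈ μ`. -/
def aggregate {S C : Type*} [DecidableEq S] [DecidableEq C]
    {d : S → ℕ} {b : C → ℕ} (μ : Finset (VSel d × VCon b)) : S → C → ℕ :=
  fun s c => (μ.filter fun p => p.1.1.1 = s ∧ p.2.1.1 = c).card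

/-- In a one-to-one matching a pair is determined by its left agent. -/
theorem IsOneToOneMatching.injOn_fst {A B : Type*} [DecidableEq A] [DecidableEq B]
    {μ : Finset (A × B)} (h : IsOneToOneMatching μ) :
    Set.InjOn Prod.fst (μ : Set (A × B)) := by
  intro p hp q hq hpq
  exact Finset.card_le_one.mp (h.1 q.1) p (Finset.mem_filter.mpr ⟨hp, hpq⟩)
    q (Finset.mem_filter.mpr ⟨hq, rfl⟩)

/-- In a one-to-one matching a pair is determined by its right agent. -/
theorem IsOneToOneMatching.injOn_snd {A B : Type*} [DecidableEq A] [DecidableEq B]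
    {μ : Finset (A × B)} (h : IsOneToOneMatching μ) :
    Set.InjOn Prod.snd (μ : Set (A × B)) := by
  intro p hp q hq hpq
  exact Finset.card_le_one.mp (h.2 q.2) p (Finset.mem_filter.mpr ⟨hp, hpq⟩)
    q (Finset.mem_filter.mpr ⟨hq, rfl⟩)

/-- At most `d s` elements of `M` are sent injectively to copies of `s`. Since `VCon` unfolds to
the same type as `VSel`, this applies to both sides of the market. -/
theorem card_copies_le {S T : Type*} [DecidableEq S] {d : S → ℕ}
    {M : Finset T} {f : T → VSel d} (hf : Set.InjOn f M) (s : S) :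
    (M.filter fun p => (f p).1.1 = s).card ≤ d s := by
  have h : (M.filter fun p => (f p).1.1 = s).card ≤ (Finset.Icc 1 (d s)).card := by
    refine Finset.card_le_card_of_injOn (fun p => (f p).1.2) ?_ ?_
    · intro p hp
      have hs : (f p).1.1 = s := (Finset.mem_filter.mp hp).2
      exact Finset.mem_coe.mpr (Finset.mem_Icc.mpr (hs ▸ (f p).2))
    · intro p hp q hq hpq
      have hp' := Finset.mem_filter.mp hp
      have hq' := Finset.mem_filter.mp hq
      exact hf hp'.1 hq'.1 (Subtype.ext (Prod.ext (hp'.2.trans hq'.2.symm) hpq))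
  simpa using h

/-- If fewer than `d s` elements of `M` are sent to copies of `s`, then some copy is missed. -/
theorem exists_free_copy {S T : Type*} [DecidableEq S] {d : S → ℕ}
    {M : Finset T} {f : T → VSel d} {s : S}
    (h : (M.filter fun p => (f p).1.1 = s).card < d s) :
    ∃ v : VSel d, v.1.1 = s ∧ ∀ p ∈ M, f p ≠ v := by
  have hlt : ((M.filter fun p => (f p).1.1 = s).image fun p => (f p).1.2).card
      < (Finset.Icc 1 (d s)).card := by
    simpa using Finset.card_image_le.trans_lt h
  obtain ⟨k, hk, hk'⟩ := Finset.exists_mem_notMem_of_card_lt_card hlt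
  refine ⟨⟨(s, k), Finset.mem_Icc.mp hk⟩, rfl, fun p hp hpv => hk' ?_⟩
  exact Finset.mem_image.mpr ⟨p, Finset.mem_filter.mpr ⟨hp, by rw [hpv]⟩, by simp only [hpv]⟩

theorem sum_aggregate_seller {S C : Type*} [Fintype C] [DecidableEq S] [DecidableEq C]
    {d : S → ℕ} {b : C → ℕ} (μ : Finset (VSel d × VCon b)) (s : S) :
    ∑ c, aggregate μ s c = (μ.filter fun p => p.1.1.1 = s).card := by
  rw [Finset.card_eq_sum_card_fiberwise (f := fun p => p.2.1.1) (t := Finset.univ)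
    (fun _ _ => Finset.mem_coe.mpr (Finset.mem_univ _))]
  simp only [aggregate, Finset.filter_filter]

theorem sum_aggregate_consumer {S C : Type*} [Fintype S] [DecidableEq S] [DecidableEq C]
    {d : S → ℕ} {b : C → ℕ} (μ : Finset (VSel d × VCon b)) (c : C) :
    ∑ s, aggregate μ s c = (μ.filter fun p => p.2.1.1 = c).card := by
  rw [Finset.card_eq_sum_card_fiberwise (f := fun p => p.1.1.1) (t := Finset.univ)
    (fun _ _ => Finset.mem_coe.mpr (Finset.mem_univ _))]
  simp only [aggregate, Finset.filter_filter, and_comm]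

theorem exists_pair_of_aggregate_pos {S C : Type*} [DecidableEq S] [DecidableEq C]
    {d : S → ℕ} {b : C → ℕ} {μ : Finset (VSel d × VCon b)} {s : S} {c : C}
    (h : 0 < aggregate μ s c) : ∃ p ∈ μ, p.1.1.1 = s ∧ p.2.1.1 = c := by
  obtain ⟨p, hp⟩ := Finset.card_pos.mp h
  exact ⟨p, Finset.mem_filter.mp hp⟩

/-- If seller `s` wants consumer `c`, in the sense of the first half of the definition of a
blocking pair of an allocation, then some single copy of `s` is unmatched or matched to a copy of
a consumer strictly worse than `c`. -/
theorem exists_willing_seller {S C : Type*} [Fintype C] [DecidableEq S] [DecidableEq C]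
    {d : S → ℕ} {b : C → ℕ} {prefS : S → C → C → Prop} {μ : Finset (VSel d × VCon b)}
    (hμ : IsOneToOneMatching μ) {s : S} {c : C}
    (h : (∑ c', aggregate μ s c' < d s) ∨ ∃ c', 0 < aggregate μ s c' ∧ prefS s c c') :
    ∃ v : VSel d, v.1.1 = s ∧ ∀ w, (v, w) ∈ μ → prefS s c w.1.1 := by
  rcases h with h | ⟨c', hpos, hpref⟩
  · rw [sum_aggregate_seller] at h
    obtain ⟨v, hv, hfree⟩ := exists_free_copy (f := Prod.fst) h
    exact ⟨v, hv, fun w hw => absurd rfl (hfree _ hw)⟩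
  · obtain ⟨p, hp, hps, hpc⟩ := exists_pair_of_aggregate_pos hpos
    refine ⟨p.1, hps, fun w hw => ?_⟩
    have hpw : (p.1, w) = p := hμ.injOn_fst hw hp rfl
    have hw' : w = p.2 := congrArg Prod.snd hpw
    rwa [hw', hpc]

/-- The counterpart of `exists_willing_seller` on the consumer side. -/
theorem exists_willing_consumer {S C : Type*} [Fintype S] [DecidableEq S] [DecidableEq C]
    {d : S → ℕ} {b : C → ℕ} {prefC : C → S → S → Prop} {μ : Finset (VSel d × VCon b)}
    (hμ : IsOneToOneMatching μ) {s : S} {c : C}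
    (h : (∑ s', aggregate μ s' c < b c) ∨ ∃ s', 0 < aggregate μ s' c ∧ prefC c s s') :
    ∃ w : VCon b, w.1.1 = c ∧ ∀ v, (v, w) ∈ μ → prefC c s v.1.1 := by
  rcases h with h | ⟨s', hpos, hpref⟩
  · rw [sum_aggregate_consumer] at h
    obtain ⟨w, hw, hfree⟩ := exists_free_copy (f := Prod.snd) h
    exact ⟨w, hw, fun v hv => absurd rfl (hfree _ hv)⟩
  · obtain ⟨p, hp, hps, hpc⟩ := exists_pair_of_aggregate_pos hpos
    refine ⟨p.2, hpc, fun v hv => ?_⟩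
    have hpv : (v, p.2) = p := hμ.injOn_snd hv hp rfl
    have hv' : v = p.1 := congrArg Prod.fst hpv
    rwa [hv', hps]

/-- **Virtual-agent reduction, aggregation direction.** If `μ` is a stable
one-to-one matching between the virtual sellers and virtual consumers of a
capacitated energy market (with the inherited block-level preferences), then
its aggregation is a feasible and stable allocation of the market. -/
theorem aggregate_of_stable_virtual_matching
    {S C : Type*} [Fintype S] [Fintype C] [DecidableEq S] [DecidableEq C]
    (d : S → ℕ) (b : C → ℕ)
    (prefS : S → C → C → Prop) (prefC : C → S → S → Prop)
    (hS : ∀ s : S, IsStrictTotalOrder C (prefS s))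
    (hC : ∀ c : C, IsStrictTotalOrder S (prefC c))
    (μ : Finset (VSel d × VCon b))
    (hμ : IsStableMatching (vPrefS prefS d b) (vPrefC prefC d b) μ) :
    FeasibleAlloc d b (aggregate μ) ∧
      StableAlloc prefS prefC d b (aggregate μ) := by
  obtain ⟨hone, hstable⟩ := hμ
  refine ⟨⟨fun s => ?_, fun c => ?_⟩, ?_⟩
  · rw [sum_aggregate_seller]
    exact card_copies_le (f := Prod.fst) hone.injOn_fst s
  · rw [sum_aggregate_consumer]
    exact card_copies_le (f := Prod.snd) hone.injOn_snd c
  · rintro s c ⟨hs, hc⟩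
    obtain ⟨v, rfl, hv⟩ := exists_willing_seller hone hs
    obtain ⟨w, rfl, hw⟩ := exists_willing_consumer hone hc
    exact hstable v w ⟨fun hvw => (hS v.1.1).irrefl _ (hv w hvw),
      fun v' hv' => Or.inl (hw v' hv'), fun w' hw' => Or.inl (hv w' hw')⟩
end

section
/- Virtual-agent reduction (expansion direction): if A is a feasible and stable allocation of a capacitated energy market, then there exists a stable one-to-one matching μ between the virtual sellers V_S and the virtual consumers V_C (with the inherited block-level preferences) whose aggregation equals A, i.e., for all s and c the number of pairs ((s,k),(c,i)) ∈ μ equals A s c. -/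
open Classical in
/-- The total weight of the elements strictly preferred to `x`: the number of blocks that precede
those given to `x` when the blocks are listed in decreasing order of preference. -/
noncomputable def blockOffset {X : Type*} [Fintype X] (r : X → X → Prop) (w : X → ℕ) (x : X) : ℕ :=
  ∑ y with r y x, w y

lemma rel_trichotomy {X : Type*} {r : X → X → Prop} (hr : IsStrictTotalOrder X r) (x y : X) :
    r x y ∨ x = y ∨ r y x := by
  by_contra! h
  exact h.2.1 (hr.trichotomous x y h.1 h.2.2)

section BlockOffset

variable {X : Type*} [Fintype X] {r : X → X → Prop}

lemma blockOffset_add_le (hr : IsStrictTotalOrder X r) (w : X → ℕ) {x y : X} (h : r x y) :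
    blockOffset r w x + w x ≤ blockOffset r w y := by
  classical
  unfold blockOffset
  have hx : x ∉ Finset.univ.filter (fun z => r z x) := by
    simpa using hr.irrefl x
  rw [add_comm, ← Finset.sum_insert hx]
  refine Finset.sum_le_sum_of_subset fun z hz => ?_
  simp only [Finset.mem_insert, Finset.mem_filter, Finset.mem_univ, true_and] at hz ⊢
  rcases hz with rfl | hz
  · exact h
  · exact hr.trans _ _ _ hz h

lemma blockOffset_add_le_sum (hr : IsStrictTotalOrder X r) (w : X → ℕ) (x : X) :
    blockOffset r w x + w x ≤ ∑ y, w y := by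
  classical
  unfold blockOffset
  have hx : x ∉ Finset.univ.filter (fun z => r z x) := by
    simpa using hr.irrefl x
  rw [add_comm, ← Finset.sum_insert hx]
  exact Finset.sum_le_sum_of_subset (Finset.subset_univ _)

/-- The intervals of distinct elements are disjoint. -/
lemma blockOffset_inj (hr : IsStrictTotalOrder X r) (w : X → ℕ) {x y : X} {j l : ℕ}
    (hj : j < w x) (hl : l < w y) (h : blockOffset r w x + j = blockOffset r w y + l) :
    x = y := by
  rcases rel_trichotomy hr x y with hxy | hxy | hxy
  · have := blockOffset_add_le hr w hxy
    omega
  · exact hxy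
  · have := blockOffset_add_le hr w hxy
    omega

/-- The intervals cover every index below the total weight: being disjoint, they have the right
total number of elements. -/
lemma exists_blockOffset (hr : IsStrictTotalOrder X r) (w : X → ℕ) {k : ℕ} (hk : k < ∑ y, w y) :
    ∃ x, ∃ j < w x, k = blockOffset r w x + j := by
  let f : (Σ x, Fin (w x)) → Fin (∑ y, w y) := fun p =>
    ⟨blockOffset r w p.1 + p.2, by
      have := blockOffset_add_le_sum hr w p.1
      have := p.2.2
      omega⟩
  have hf : Function.Injective f := by
    rintro ⟨x, j, hj⟩ ⟨y, l, hl⟩ h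
    have h' : blockOffset r w x + j = blockOffset r w y + l := congrArg Fin.val h
    obtain rfl := blockOffset_inj hr w hj hl h'
    obtain rfl : j = l := by omega
    rfl
  have hb : Function.Bijective f :=
    (Fintype.bijective_iff_injective_and_card f).2 ⟨hf, by simp⟩
  obtain ⟨⟨x, j⟩, hx⟩ := hb.2 ⟨k, hk⟩
  exact ⟨x, j, j.2, (congrArg Fin.val hx).symm⟩

end BlockOffset

/-- **Virtual-agent reduction, expansion direction.** If `A` is a feasible and
stable allocation of a capacitated energy market, then there is a stable
one-to-one matching `μ` between the virtual sellers and virtual consumers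
(with the inherited block-level preferences) whose aggregation equals `A`. -/
theorem exists_stable_virtual_matching_of_stable_alloc
    {S C : Type*} [Fintype S] [Fintype C] [DecidableEq S] [DecidableEq C]
    (d : S → ℕ) (b : C → ℕ)
    (prefS : S → C → C → Prop) (prefC : C → S → S → Prop)
    (hS : ∀ s : S, IsStrictTotalOrder C (prefS s))
    (hC : ∀ c : C, IsStrictTotalOrder S (prefC c))
    (A : S → C → ℕ) (hfeas : FeasibleAlloc d b A)
    (hstab : StableAlloc prefS prefC d b A) :
    ∃ μ : Finset (VSel d × VCon b),
      IsStableMatching (vPrefS prefS d b) (vPrefC prefC d b) μ ∧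
      ∀ (s : S) (c : C), aggregate μ s c = A s c := by
  classical
  obtain ⟨hfS, hfC⟩ := hfeas
  let oS : S → C → ℕ := fun s => blockOffset (prefS s) (A s)
  let oC : C → S → ℕ := fun c => blockOffset (prefC c) (fun s => A s c)
  have leS : ∀ s c, oS s c + A s c ≤ d s := fun s c =>
    (blockOffset_add_le_sum (hS s) (A s) c).trans (hfS s)
  have leC : ∀ s c, oC c s + A s c ≤ b c := fun s c =>
    (blockOffset_add_le_sum (hC c) (fun s => A s c) s).trans (hfC c)
  let f : (Σ p : S × C, Fin (A p.1 p.2)) → VSel d × VCon b := fun x =>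
    (⟨(x.1.1, oS x.1.1 x.1.2 + x.2 + 1), by
        have := leS x.1.1 x.1.2
        have := x.2.2
        dsimp only
        omega⟩,
     ⟨(x.1.2, oC x.1.2 x.1.1 + x.2 + 1), by
        have := leC x.1.1 x.1.2
        have := x.2.2
        dsimp only
        omega⟩)
  let μ : Finset (VSel d × VCon b) := Finset.univ.image f
  have mem : ∀ (p : VSel d) (q : VCon b), (p, q) ∈ μ ↔ ∃ j < A p.1.1 q.1.1,
      p.1.2 = oS p.1.1 q.1.1 + j + 1 ∧ q.1.2 = oC q.1.1 p.1.1 + j + 1 := by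
    rintro ⟨⟨s, k⟩, hk⟩ ⟨⟨c, i⟩, hi⟩
    simp only [μ, Finset.mem_image, Finset.mem_univ, true_and]
    constructor
    · rintro ⟨⟨⟨s', c'⟩, j⟩, h⟩
      simp only [f, Prod.mk.injEq, Subtype.mk.injEq] at h
      obtain ⟨⟨rfl, rfl⟩, rfl, rfl⟩ := h
      exact ⟨j, j.2, rfl, rfl⟩
    · rintro ⟨j, hj, h1, h2⟩
      subst h1 h2
      exact ⟨⟨(s, c), ⟨j, hj⟩⟩, rfl⟩
  have uniqS : ∀ p q q', (p, q) ∈ μ → (p, q') ∈ μ → q = q' := by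
    rintro ⟨⟨s, k⟩, hk⟩ ⟨⟨c, i⟩, hi⟩ ⟨⟨c', i'⟩, hi'⟩ h h'
    obtain ⟨j, hj, h1, h2⟩ := (mem _ _).1 h
    obtain ⟨l, hl, h3, h4⟩ := (mem _ _).1 h'
    dsimp only at hj h1 h2 hl h3 h4
    obtain rfl : c = c' := blockOffset_inj (hS s) (A s) hj hl (by
      change oS s c + j = oS s c' + l
      omega)
    obtain rfl : i = i' := by omega
    rfl
  have uniqC : ∀ p p' q, (p, q) ∈ μ → (p', q) ∈ μ → p = p' := by
    rintro ⟨⟨s, k⟩, hk⟩ ⟨⟨s', k'⟩, hk'⟩ ⟨⟨c, i⟩, hi⟩ h h'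
    obtain ⟨j, hj, h1, h2⟩ := (mem _ _).1 h
    obtain ⟨l, hl, h3, h4⟩ := (mem _ _).1 h'
    dsimp only at hj h1 h2 hl h3 h4
    obtain rfl : s = s' := blockOffset_inj (hC c) (fun s => A s c) hj hl (by
      change oC c s + j = oC c s' + l
      omega)
    obtain rfl : k = k' := by omega
    rfl
  have matchedS : ∀ p : VSel d, p.1.2 ≤ ∑ c, A p.1.1 c → ∃ q, (p, q) ∈ μ := by
    rintro ⟨⟨s, k⟩, hk, hk'⟩ h
    dsimp only at h hk hk'
    obtain ⟨c, j, hj, hkj⟩ := exists_blockOffset (hS s) (A s) (k := k - 1) (by omega)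
    change k - 1 = oS s c + j at hkj
    have := leC s c
    refine ⟨⟨(c, oC c s + j + 1), ?_, ?_⟩, (mem _ _).2 ⟨j, hj, ?_, rfl⟩⟩ <;> dsimp only <;> omega
  have matchedC : ∀ q : VCon b, q.1.2 ≤ ∑ s, A s q.1.1 → ∃ p, (p, q) ∈ μ := by
    rintro ⟨⟨c, i⟩, hi, hi'⟩ h
    dsimp only at h hi hi'
    obtain ⟨s, j, hj, hij⟩ := exists_blockOffset (hC c) (fun s => A s c) (k := i - 1) (by omega)
    change i - 1 = oC c s + j at hij
    have := leS s c
    refine ⟨⟨(s, oS s c + j + 1), ?_, ?_⟩, (mem _ _).2 ⟨j, hj, rfl, ?_⟩⟩ <;> dsimp only <;> omega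
  refine ⟨μ, ⟨⟨?_, ?_⟩, ?_⟩, ?_⟩
  · intro a
    rw [Finset.card_le_one]
    rintro ⟨p, q⟩ h ⟨p', q'⟩ h'
    rw [Finset.mem_filter] at h h'
    obtain ⟨h, rfl⟩ := h
    obtain ⟨h', rfl⟩ := h'
    rw [uniqS _ _ _ h h']
  · intro a
    rw [Finset.card_le_one]
    rintro ⟨p, q⟩ h ⟨p', q'⟩ h'
    rw [Finset.mem_filter] at h h'
    obtain ⟨h, rfl⟩ := h
    obtain ⟨h', rfl⟩ := h'
    rw [uniqC _ _ _ h h']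
  · rintro ⟨⟨s, k⟩, hk⟩ ⟨⟨c, i⟩, hi⟩ ⟨-, hbC, hbS⟩
    refine hstab s c ⟨?_, ?_⟩
    · by_cases hun : k ≤ ∑ c, A s c
      · right
        obtain ⟨⟨⟨c', i'⟩, hi'⟩, hm⟩ := matchedS ⟨(s, k), hk⟩ hun
        obtain ⟨j, hj, h1, h2⟩ := (mem _ _).1 hm
        dsimp only at hj h1 h2
        rcases hbS _ hm with hp | ⟨he, hlt⟩
        · exact ⟨c', by omega, hp⟩
        · exfalso
          dsimp only at he hlt
          subst he
          have hsum : oC c s + A s c ≤ ∑ s, A s c :=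
            blockOffset_add_le_sum (hC c) (fun s => A s c) s
          obtain ⟨⟨⟨s', k'⟩, hk'⟩, hm'⟩ := matchedC ⟨(c, i), hi⟩ (by dsimp only; omega)
          obtain ⟨l, hl, h3, h4⟩ := (mem _ _).1 hm'
          dsimp only at hl h3 h4
          rcases hbC _ hm' with hp | ⟨he, hlt'⟩
          · have : oC c s + A s c ≤ oC c s' :=
              blockOffset_add_le (hC c) (fun s => A s c) hp
            omega
          · dsimp only at he hlt'
            subst he
            omega
      · left
        dsimp only at hk
        omega
    · by_cases hun : i ≤ ∑ s, A s c
      · right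
        obtain ⟨⟨⟨s', k'⟩, hk'⟩, hm⟩ := matchedC ⟨(c, i), hi⟩ hun
        obtain ⟨j, hj, h1, h2⟩ := (mem _ _).1 hm
        dsimp only at hj h1 h2
        rcases hbC _ hm with hp | ⟨he, hlt⟩
        · exact ⟨s', by omega, hp⟩
        · exfalso
          dsimp only at he hlt
          subst he
          have hsum : oS s c + A s c ≤ ∑ c, A s c :=
            blockOffset_add_le_sum (hS s) (A s) c
          obtain ⟨⟨⟨c', i'⟩, hi'⟩, hm'⟩ := matchedS ⟨(s, k), hk⟩ (by dsimp only; omega)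
          obtain ⟨l, hl, h3, h4⟩ := (mem _ _).1 hm'
          dsimp only at hl h3 h4
          rcases hbS _ hm' with hp | ⟨he, hlt'⟩
          · have : oS s c + A s c ≤ oS s c' :=
              blockOffset_add_le (hS s) (A s) hp
            omega
          · dsimp only at he hlt'
            subst he
            omega
      · left
        dsimp only at hi
        omega
  · intro s c
    have himg : (μ.filter fun p => p.1.1.1 = s ∧ p.2.1.1 = c) =
        Finset.univ.image (fun j : Fin (A s c) => f ⟨(s, c), j⟩) := by
      ext x
      simp only [μ, Finset.mem_filter, Finset.mem_image, Finset.mem_univ, true_and]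
      constructor
      · rintro ⟨⟨⟨⟨s', c'⟩, j⟩, rfl⟩, rfl, rfl⟩
        exact ⟨j, rfl⟩
      · rintro ⟨j, rfl⟩
        exact ⟨⟨_, rfl⟩, rfl, rfl⟩
    have hinj : Function.Injective (fun j : Fin (A s c) => f ⟨(s, c), j⟩) := by
      intro j l h
      simp only [f, Prod.mk.injEq, Subtype.mk.injEq] at h
      exact Fin.ext (by omega)
    unfold aggregate
    rw [himg, Finset.card_image_of_injective _ hinj, Finset.card_univ, Fintype.card_fin]
end

section
/- Rejection lemma (used in the paper's contradiction argument for stability): in the consumer-proposing deferred-acceptance algorithm, if seller s at some round rejects consumer c (i.e., c proposes to s or is tentatively held by s, and is not the consumer s tentatively accepts that round), then at the end of every subsequent round, and in particular in the output matching, seller s is matched to some consumer c' with c' >_s c; in particular s is not unmatched in the output and is never again matched to c. -/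
/-!
A seller's tentative match never gets worse: in every round the seller keeps the best of its
candidates (current match and new proposers), so whoever it holds afterwards is weakly preferred to
every candidate (`exists_held_daStep_ge`). A candidate that is rejected differs from the accepted
consumer, so in that round the preference is strict by antisymmetry; applying the same fact to the
held consumer in each later round, transitivity preserves the strict preference forever.
-/

/-!
The consumer-proposing deferred-acceptance algorithm on a one-to-one matching
market.  The market has finite sets of sellers `S` and consumers `C`; the
complete strict preference order of each seller `s` over consumers is given
as a linear order `prefS s` on `C` (larger means more preferred), and the
preference of each consumer `c` over sellers as a linear order `prefC c` on
`S` (larger means more preferred).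

A state of the algorithm records the tentative match `held s` of every seller
`s` and the set `proposed c` of sellers that consumer `c` has proposed to so
far.  In each round every currently unmatched consumer that has not yet
proposed to every seller proposes to its most preferred seller among those it
has not yet proposed to, and every seller tentatively accepts the consumer it
most prefers among its current tentative match and its new proposers,
rejecting all others.
-/

open scoped Classical

noncomputable section

/-- A state of the deferred-acceptance algorithm: the tentative match of every
seller and the set of sellers each consumer has proposed to so far. -/
structure DAState (S C : Type*) where
  held : S → Option C
  proposed : C → Finset S

variable {S C : Type*} [Fintype S] [Fintype C] [DecidableEq S] [DecidableEq C]

/-- The proposal made by consumer `c` in the round starting from state `st`: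
if `c` is currently unmatched and has not proposed to every seller, it
proposes to its most preferred seller among those not yet proposed to;
otherwise it makes no proposal. -/
def proposes (prefC : C → LinearOrder S) (st : DAState S C) (c : C) : Option S :=
  letI := prefC c
  if h : (¬ ∃ s : S, st.held s = some c) ∧ (Finset.univ \ st.proposed c).Nonempty then
    some ((Finset.univ \ st.proposed c).max' h.2)
  else none

/-- One round of the consumer-proposing deferred-acceptance algorithm: each
seller tentatively accepts the single consumer it most prefers among its
current tentative match (if any) and its new proposers, rejecting all others,
and each proposing consumer records its proposal. -/
def daStep (prefS : S → LinearOrder C) (prefC : C → LinearOrder S)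
    (st : DAState S C) : DAState S C where
  held s :=
    letI := prefS s
    let cands : Finset C :=
      (st.held s).toFinset ∪ Finset.univ.filter (fun c => proposes prefC st c = some s)
    if h : cands.Nonempty then some (cands.max' h) else none
  proposed c :=
    match proposes prefC st c with
    | some s => insert s (st.proposed c)
    | none => st.proposed c

/-- The initial state: no seller holds a consumer, nobody has proposed. -/
def daInit : DAState S C := ⟨fun _ => none, fun _ => ∅⟩

/-- The state of the deferred-acceptance algorithm after `n` rounds. -/
def runDA (prefS : S → LinearOrder C) (prefC : C → LinearOrder S) (n : ℕ) :
    DAState S C :=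
  (daStep prefS prefC)^[n] daInit

/-- Consumer `c` proposes to seller `s` in round `t + 1`, i.e. in the round
executed from the state reached after `t` rounds. -/
def ProposesAt (prefS : S → LinearOrder C) (prefC : C → LinearOrder S)
    (t : ℕ) (c : C) (s : S) : Prop :=
  proposes prefC (runDA prefS prefC t) c = some s

/-- The algorithm has terminated after `n` rounds: every consumer is either
tentatively matched or has proposed to every seller, so no proposal is made. -/
def TerminatedAt (prefS : S → LinearOrder C) (prefC : C → LinearOrder S)
    (n : ℕ) : Prop :=
  ∀ c : C, proposes prefC (runDA prefS prefC n) c = none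

/-- Seller `s` rejects consumer `c` in round `t + 1`: `c` proposes to `s` in
that round or is tentatively held by `s`, and `c` is not the consumer that `s`
tentatively accepts in that round. -/
def RejectsAt (prefS : S → LinearOrder C) (prefC : C → LinearOrder S)
    (t : ℕ) (s : S) (c : C) : Prop :=
  (ProposesAt prefS prefC t c s ∨ (runDA prefS prefC t).held s = some c) ∧
  (runDA prefS prefC (t + 1)).held s ≠ some c

/-- Seller `s` prefers consumer `c` to consumer `c'`. -/
def sPrefRel (prefS : S → LinearOrder C) (s : S) (c c' : C) : Prop :=
  (prefS s).lt c' c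

/-- Consumer `c` prefers seller `s` to seller `s'`. -/
def cPrefRel (prefC : C → LinearOrder S) (c : C) (s s' : S) : Prop :=
  (prefC c).lt s' s

/-- The tentative matching after `n` rounds, as a set of seller–consumer
pairs; when the algorithm has terminated after `n` rounds this is its output
matching. -/
def outputMatching (prefS : S → LinearOrder C) (prefC : C → LinearOrder S)
    (n : ℕ) : Finset (S × C) :=
  Finset.univ.filter (fun p : S × C => (runDA prefS prefC n).held p.1 = some p.2)

/-- After a round, a seller with at least one candidate `c` (its tentative match or a new proposer)
holds a consumer it weakly prefers to `c`. -/
theorem exists_held_daStep_ge (prefS : S → LinearOrder C) (prefC : C → LinearOrder S)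
    (st : DAState S C) (s : S) (c : C)
    (h : proposes prefC st c = some s ∨ st.held s = some c) :
    ∃ c' : C, (daStep prefS prefC st).held s = some c' ∧ (prefS s).le c c' := by
  letI := prefS s
  have hc : c ∈ (st.held s).toFinset ∪
      Finset.univ.filter (fun c => proposes prefC st c = some s) := by
    rcases h with h | h <;> simp [h]
  exact ⟨_, dif_pos ⟨c, hc⟩, Finset.le_max' _ c hc⟩

theorem runDA_succ (prefS : S → LinearOrder C) (prefC : C → LinearOrder S) (n : ℕ) :
    runDA prefS prefC (n + 1) = daStep prefS prefC (runDA prefS prefC n) :=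
  Function.iterate_succ_apply' _ _ _

/-- **Rejection lemma.** In the consumer-proposing deferred-acceptance
algorithm, if seller `s` rejects consumer `c` in some round (i.e. `c`
proposes to `s` or is tentatively held by `s`, and is not the consumer `s`
tentatively accepts that round), then at the end of every subsequent round —
and in particular in the output matching — seller `s` is matched to some
consumer `c'` that it strictly prefers to `c`; in particular `s` is never
unmatched afterwards and is never again matched to `c`. -/
theorem da_rejection_lemma
    (prefS : S → LinearOrder C) (prefC : C → LinearOrder S)
    (s : S) (c : C) (t : ℕ) (h : RejectsAt prefS prefC t s c) :
    ∀ t' : ℕ, t < t' →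
      ∃ c' : C, (runDA prefS prefC t').held s = some c' ∧
        sPrefRel prefS s c' c := by
  intro t' ht
  induction t', ht using Nat.le_induction with
  | base =>
    obtain ⟨hcand, hne⟩ := h
    obtain ⟨c', hc', hle⟩ := exists_held_daStep_ge prefS prefC _ s c hcand
    rw [← runDA_succ] at hc'
    refine ⟨c', hc', ?_⟩
    letI := prefS s
    refine lt_of_le_of_ne (show c ≤ c' from hle) ?_
    rintro rfl
    exact hne hc'
  | succ n _ ih =>
    obtain ⟨d, hd, hlt⟩ := ih
    obtain ⟨c', hc', hle⟩ := exists_held_daStep_ge prefS prefC _ s d (Or.inr hd)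
    rw [← runDA_succ] at hc'
    letI := prefS s
    exact ⟨c', hc', lt_of_lt_of_le (show c < d from hlt) hle⟩

end
end
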